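/- Let 0 < m ≤ 1. There exists a constant c = c(m) > 0 such that for all u, a, ψ ∈ ℝ with ψ ≤ u one has |u − a| (ψ^m − a^m)_+ ≤ c |u^((1+m)/2) − a^((1+m)/2)|². -/

import Mathlib

/-!
The constant `c = 2` works. Since the signed power is monotone, the left-hand side vanishes unless
`a < ψ ≤ u`, and then it is at most `(u - a) (u ^ m - a ^ m)`. Put `x = |u| ^ (1/2)`,
`X = |u| ^ (m/2)`, `y = |a| ^ (1/2)`, `Y = |a| ^ (m/2)`. Up to the signs of `u` and `a`, the powers
of `u` with exponents `1`, `m`, `(1 + m) / 2` are `x²`, `X²`, `x X`, and similarly for `a`.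

* If `u` and `a` have the same sign, `(x² - y²)(X² - Y²) ≤ (x X - y Y)²` is the inequality
  `0 ≤ (x Y - y X)²`.
* If they have opposite signs, `(x² + y²)(X² + Y²) ≤ 2 (x X + y Y)²` follows from
  `0 ≤ (x² - y²)(X² - Y²)`, which holds because `t ↦ t ^ m` is monotone.
-/

/-- Signed power: `a^k := |a|^(k-1) a`. -/
noncomputable def spow (a k : ℝ) : ℝ := |a| ^ (k - 1) * a

lemma spow_of_nonneg {p k : ℝ} (hp : 0 ≤ p) (hk : 0 < k) : spow p k = p ^ k := by
  rcases hp.eq_or_lt with rfl | hp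
  · simp [spow, Real.zero_rpow hk.ne']
  · rw [spow, abs_of_pos hp, Real.rpow_sub_one hp.ne', div_mul_cancel₀ _ hp.ne']

lemma spow_neg (p k : ℝ) : spow (-p) k = -spow p k := by
  simp [spow]

lemma spow_mono {k : ℝ} (hk : 0 < k) {p q : ℝ} (hpq : p ≤ q) : spow p k ≤ spow q k := by
  rcases le_total 0 p with hp | hp
  · rw [spow_of_nonneg hp hk, spow_of_nonneg (hp.trans hpq) hk]
    exact Real.rpow_le_rpow hp hpq hk.le
  · have hp' : 0 ≤ -p := by linarith
    have h1 : spow p k = -(-p) ^ k := by rw [← spow_of_nonneg hp' hk, spow_neg, neg_neg]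
    rcases le_total 0 q with hq | hq
    · rw [h1, spow_of_nonneg hq hk]
      linarith [Real.rpow_nonneg hp' k, Real.rpow_nonneg hq k]
    · have hq' : 0 ≤ -q := by linarith
      have h2 : spow q k = -(-q) ^ k := by rw [← spow_of_nonneg hq' hk, spow_neg, neg_neg]
      rw [h1, h2]
      exact neg_le_neg (Real.rpow_le_rpow hq' (by linarith) hk.le)

/-- Square-root parametrization of the powers with exponents `1`, `m` and `(1 + m) / 2`. -/
lemma exists_sqrt_factors {m p : ℝ} (hm : 0 < m) (hp : 0 ≤ p) :
    ∃ x X : ℝ, 0 ≤ x ∧ 0 ≤ X ∧ p = x ^ 2 ∧ spow p m = X ^ 2 ∧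
      spow p ((1 + m) / 2) = x * X := by
  refine ⟨p ^ (1 / 2 : ℝ), p ^ (m / 2), by positivity, by positivity, ?_, ?_, ?_⟩
  · rw [← Real.rpow_natCast, ← Real.rpow_mul hp]; norm_num
  · rw [spow_of_nonneg hp hm, ← Real.rpow_natCast, ← Real.rpow_mul hp]
    congr 1; push_cast; ring
  · rw [spow_of_nonneg hp (by linarith), ← Real.rpow_add_of_nonneg hp (by norm_num) (by linarith)]
    congr 1; ring

lemma same_sign_estimate {m p q : ℝ} (hm : 0 < m) (hp : 0 ≤ p) (hq : 0 ≤ q) :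
    (p - q) * (spow p m - spow q m) ≤
      2 * (spow p ((1 + m) / 2) - spow q ((1 + m) / 2)) ^ 2 := by
  obtain ⟨x, X, -, -, hx, hX, hxX⟩ := exists_sqrt_factors hm hp
  obtain ⟨y, Y, -, -, hy, hY, hyY⟩ := exists_sqrt_factors hm hq
  rw [hX, hY, hxX, hyY, hx, hy]
  nlinarith [sq_nonneg (x * Y - y * X), sq_nonneg (x * X - y * Y)]

lemma opposite_sign_estimate {m p q : ℝ} (hm : 0 < m) (hp : 0 ≤ p) (hq : 0 ≤ q) :
    (p + q) * (spow p m + spow q m) ≤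
      2 * (spow p ((1 + m) / 2) + spow q ((1 + m) / 2)) ^ 2 := by
  have hmono : 0 ≤ (p - q) * (spow p m - spow q m) := by
    rcases le_total p q with h | h
    · exact mul_nonneg_of_nonpos_of_nonpos (sub_nonpos.2 h) (sub_nonpos.2 (spow_mono hm h))
    · exact mul_nonneg (sub_nonneg.2 h) (sub_nonneg.2 (spow_mono hm h))
  obtain ⟨x, X, hx0, hX0, hx, hX, hxX⟩ := exists_sqrt_factors hm hp
  obtain ⟨y, Y, hy0, hY0, hy, hY, hyY⟩ := exists_sqrt_factors hm hq
  rw [hX, hY, hx, hy] at hmono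
  rw [hX, hY, hxX, hyY, hx, hy]
  have : 0 ≤ (x * X) * (y * Y) := by positivity
  nlinarith

/-- The estimate with `ψ = u`; no order between `u` and `a` is needed. -/
lemma spow_difference_estimate {m : ℝ} (hm : 0 < m) (u a : ℝ) :
    (u - a) * (spow u m - spow a m) ≤
      2 * (spow u ((1 + m) / 2) - spow a ((1 + m) / 2)) ^ 2 := by
  rcases le_total 0 u with hu | hu <;> rcases le_total 0 a with ha | ha
  · exact same_sign_estimate hm hu ha
  · have h := opposite_sign_estimate hm hu (neg_nonneg.2 ha)
    simp only [spow_neg] at h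
    linarith
  · have h := opposite_sign_estimate hm (neg_nonneg.2 hu) ha
    simp only [spow_neg] at h
    linarith
  · have h := same_sign_estimate hm (neg_nonneg.2 hu) (neg_nonneg.2 ha)
    simp only [spow_neg] at h
    linarith

/-- For `0 < m ≤ 1` there is `c = c(m) > 0` such that for all `u, a, ψ ∈ ℝ` with `ψ ≤ u`:
`|u − a| (ψ^m − a^m)_+ ≤ c |u^((1+m)/2) − a^((1+m)/2)|²`. -/
theorem obstacle_difference_estimate (m : ℝ) (hm0 : 0 < m) (hm1 : m ≤ 1) :
    ∃ c : ℝ, 0 < c ∧ ∀ u a ψ : ℝ, ψ ≤ u →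
      |u - a| * max (spow ψ m - spow a m) 0 ≤
        c * |spow u ((1 + m) / 2) - spow a ((1 + m) / 2)| ^ 2 := by
  refine ⟨2, two_pos, fun u a ψ hψ => ?_⟩
  rw [sq_abs]
  rcases le_or_gt ψ a with h | h
  · rw [max_eq_right (sub_nonpos.2 (spow_mono hm0 h)), mul_zero]
    positivity
  · have hau : 0 ≤ u - a := by linarith
    rw [max_eq_left (sub_nonneg.2 (spow_mono hm0 h.le)), abs_of_nonneg hau]
    exact (mul_le_mul_of_nonneg_left (sub_le_sub_right (spow_mono hm0 hψ) _) hau).trans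
      (spow_difference_estimate hm0 u a)
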